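/- For every L_⊳-formula φ: φ ∈ ICK ⊕ ((p ∧ (p ⊳ q)) → q) ⊕ (((p ⊳ q) ∧ (q ⊳ r)) → (p ⊳ r)) if and only if φ is valid on every conditional Kripke frame (X, ≤, 𝓡) satisfying, for all worlds x ∈ X and all upsets a, b: x ∈ a implies x ∈ ↑(R_a[x]), and R_a[x] ⊆ b implies R_a[x] ⊆ ↑(R_b[x]). -/

import Mathlib

/-! ## The conditional language `L_⊳` -/

/-- Formulas of the conditional language `L_⊳`, with proposition letters
indexed by the countable set `ℕ`. -/
inductive CForm : Type where
  | var : ℕ → CForm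
  | bot : CForm
  | and : CForm → CForm → CForm
  | or : CForm → CForm → CForm
  | imp : CForm → CForm → CForm
  | cond : CForm → CForm → CForm

/-- `⊤ := ⊥ → ⊥`. -/
def cTop : CForm := CForm.imp CForm.bot CForm.bot

/-- `φ ↔ ψ := (φ → ψ) ∧ (ψ → φ)`. -/
def cIff (φ ψ : CForm) : CForm := CForm.and (CForm.imp φ ψ) (CForm.imp ψ φ)

/-- Uniform substitution of formulas for proposition letters. -/
def psubst (σ : ℕ → CForm) : CForm → CForm
  | CForm.var q => σ q
  | CForm.bot => CForm.bot
  | CForm.and φ ψ => CForm.and (psubst σ φ) (psubst σ ψ)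
  | CForm.or φ ψ => CForm.or (psubst σ φ) (psubst σ ψ)
  | CForm.imp φ ψ => CForm.imp (psubst σ φ) (psubst σ ψ)
  | CForm.cond φ ψ => CForm.cond (psubst σ φ) (psubst σ ψ)

/-- The logic `ICK ⊕ Γ`: the smallest set of `L_⊳`-formulas containing an
axiomatisation of intuitionistic propositional logic, the formulas of `Γ`, the
axioms `(k_c)` and `(n_c)`, closed under uniform substitution, modus ponens and
the two congruence rules. -/
inductive ICK (Γ : Set CForm) : CForm → Prop where
  | prem {φ : CForm} : φ ∈ Γ → ICK Γ φ
  | a1 : ICK Γ (CForm.imp (CForm.and (CForm.var 0) (CForm.var 1)) (CForm.var 0))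
  | a2 : ICK Γ (CForm.imp (CForm.and (CForm.var 0) (CForm.var 1)) (CForm.var 1))
  | a3 : ICK Γ (CForm.imp (CForm.imp (CForm.var 0) (CForm.var 1))
      (CForm.imp (CForm.imp (CForm.var 0) (CForm.var 2))
        (CForm.imp (CForm.var 0) (CForm.and (CForm.var 1) (CForm.var 2)))))
  | a4 : ICK Γ (CForm.imp (CForm.var 0) (CForm.or (CForm.var 0) (CForm.var 1)))
  | a5 : ICK Γ (CForm.imp (CForm.var 1) (CForm.or (CForm.var 0) (CForm.var 1)))
  | a6 : ICK Γ (CForm.imp (CForm.imp (CForm.var 0) (CForm.var 2))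
      (CForm.imp (CForm.imp (CForm.var 1) (CForm.var 2))
        (CForm.imp (CForm.or (CForm.var 0) (CForm.var 1)) (CForm.var 2))))
  | a7 : ICK Γ (CForm.imp CForm.bot (CForm.var 0))
  | a8 : ICK Γ (CForm.imp (CForm.var 0) (CForm.imp (CForm.var 1) (CForm.var 0)))
  | a9 : ICK Γ (CForm.imp
      (CForm.imp (CForm.var 0) (CForm.imp (CForm.var 1) (CForm.var 2)))
      (CForm.imp (CForm.imp (CForm.var 0) (CForm.var 1))
        (CForm.imp (CForm.var 0) (CForm.var 2))))
  | kc : ICK Γ (cIff (CForm.cond (CForm.var 0) (CForm.and (CForm.var 1) (CForm.var 2)))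
      (CForm.and (CForm.cond (CForm.var 0) (CForm.var 1))
        (CForm.cond (CForm.var 0) (CForm.var 2))))
  | nc : ICK Γ (cIff (CForm.cond (CForm.var 0) cTop) cTop)
  | subst {φ : CForm} (σ : ℕ → CForm) : ICK Γ φ → ICK Γ (psubst σ φ)
  | mp {φ ψ : CForm} : ICK Γ (CForm.imp φ ψ) → ICK Γ φ → ICK Γ ψ
  | congL {φ ψ χ : CForm} :
      ICK Γ (cIff φ ψ) → ICK Γ (cIff (CForm.cond φ χ) (CForm.cond ψ χ))
  | congR {φ ψ χ : CForm} :
      ICK Γ (cIff φ ψ) → ICK Γ (cIff (CForm.cond χ φ) (CForm.cond χ ψ))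

/-! ## Conditional Kripke frames and semantics -/

/-- `a` is an upset (upward closed set) w.r.t. the relation `le`. -/
def IsUpset {X : Type} (le : X → X → Prop) (a : Set X) : Prop :=
  ∀ ⦃x y : X⦄, le x y → x ∈ a → y ∈ a

/-- The upward closure `↑s` of a set `s` w.r.t. the relation `le`. -/
def upCl {X : Type} (le : X → X → Prop) (s : Set X) : Set X :=
  {z | ∃ y ∈ s, le y z}

/-- Truth sets of `L_⊳`-formulas, by intuitionistic Kripke semantics for the
propositional connectives, where `x ⊨ φ ⊳ ψ` iff every `y` with
`x R_{V(φ)} y` satisfies `ψ` (here `V(φ)` is the truth set of `φ`). -/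
def csat {X : Type} (le : X → X → Prop) (R : Set X → X → X → Prop)
    (V : ℕ → Set X) : CForm → Set X
  | CForm.var p => V p
  | CForm.bot => ∅
  | CForm.and φ ψ => csat le R V φ ∩ csat le R V ψ
  | CForm.or φ ψ => csat le R V φ ∪ csat le R V ψ
  | CForm.imp φ ψ => {x | ∀ y, le x y → y ∈ csat le R V φ → y ∈ csat le R V ψ}
  | CForm.cond φ ψ => {x | ∀ y, R (csat le R V φ) x y → y ∈ csat le R V ψ}

/-- A conditional Kripke frame: a nonempty preordered set `(X, le)` with a
family of relations `R a` (indexed by the upsets `a`) satisfying the coherence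
condition `(≤ ∘ R_a) ⊆ (R_a ∘ ≤)`. -/
structure CondFrame where
  X : Type
  ne : Nonempty X
  le : X → X → Prop
  le_refl : ∀ x, le x x
  le_trans : ∀ ⦃x y z⦄, le x y → le y z → le x z
  R : Set X → X → X → Prop
  coh : ∀ a : Set X, IsUpset le a →
    ∀ ⦃x y z⦄, le x y → R a y z → ∃ w, R a x w ∧ le w z

/-- Validity on a conditional Kripke frame: truth at every world under every
valuation of the proposition letters by upsets. -/
def CondFrame.valid (F : CondFrame) (φ : CForm) : Prop :=
  ∀ V : ℕ → Set F.X, (∀ p, IsUpset F.le (V p)) → ∀ x, x ∈ csat F.le F.R V φ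

/-! ## Conditional Heyting algebras -/

/-- A conditional Heyting algebra: a Heyting algebra with a binary operation
`cond` (written `⊳` in the paper) preserving finite meets in its second
argument. -/
class CondHeyting (A : Type) extends HeytingAlgebra A where
  cond : A → A → A
  cond_inf : ∀ a b c : A, cond a (b ⊓ c) = cond a b ⊓ cond a c
  cond_top : ∀ a : A, cond a ⊤ = ⊤

/-- Evaluation of an `L_⊳`-formula in a conditional Heyting algebra under an
assignment `σ` of the proposition letters. -/
def evalCHA {A : Type} [CondHeyting A] (σ : ℕ → A) : CForm → A
  | CForm.var p => σ p
  | CForm.bot => ⊥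
  | CForm.and φ ψ => evalCHA σ φ ⊓ evalCHA σ ψ
  | CForm.or φ ψ => evalCHA σ φ ⊔ evalCHA σ ψ
  | CForm.imp φ ψ => evalCHA σ φ ⇨ evalCHA σ ψ
  | CForm.cond φ ψ => CondHeyting.cond (evalCHA σ φ) (evalCHA σ ψ)

/-- A formula is satisfied in a conditional Heyting algebra if it evaluates to
`⊤` under every assignment. -/
def chaSat (A : Type) [CondHeyting A] (φ : CForm) : Prop :=
  ∀ σ : ℕ → A, evalCHA σ φ = ⊤

/-- A prime filter: a proper, nonempty, upward closed subset, closed under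
binary meets, such that `a ⊔ b ∈ x` implies `a ∈ x` or `b ∈ x`. -/
def IsPrimeFilter {A : Type} [Lattice A] (x : Set A) : Prop :=
  x.Nonempty ∧ x ≠ Set.univ ∧
  (∀ ⦃a b : A⦄, a ∈ x → a ≤ b → b ∈ x) ∧
  (∀ ⦃a b : A⦄, a ∈ x → b ∈ x → a ⊓ b ∈ x) ∧
  (∀ ⦃a b : A⦄, a ⊔ b ∈ x → a ∈ x ∨ b ∈ x)

/-! ## General conditional frames -/

/-- A general conditional frame `(X, ≤, 𝓡, A)`. -/
structure GenFrame where
  X : Type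
  le : X → X → Prop
  le_refl : ∀ x, le x x
  le_trans : ∀ ⦃x y z⦄, le x y → le y z → le x z
  le_antisymm : ∀ ⦃x y⦄, le x y → le y x → x = y
  A : Set (Set X)
  upA : ∀ a ∈ A, IsUpset le a
  univ_mem : Set.univ ∈ A
  empty_mem : ∅ ∈ A
  inter_mem : ∀ a ∈ A, ∀ b ∈ A, a ∩ b ∈ A
  union_mem : ∀ a ∈ A, ∀ b ∈ A, a ∪ b ∈ A
  R : Set X → X → X → Prop
  himp_mem : ∀ a ∈ A, ∀ b ∈ A, {x | ∀ y, le x y → y ∈ a → y ∈ b} ∈ A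
  cimp_mem : ∀ a ∈ A, ∀ b ∈ A, {x | ∀ y, R a x y → y ∈ b} ∈ A
  coh : ∀ a ∈ A, ∀ ⦃x y z⦄, le x y → R a y z → ∃ w, R a x w ∧ le w z

/-- The carrier of the complex algebra of a general frame: the admissible
upsets. -/
def GenFrame.AUp (G : GenFrame) : Type := {a : Set G.X // a ∈ G.A}

instance GenFrame.instLatticeAUp (G : GenFrame) : Lattice G.AUp where
  le a b := a.val ⊆ b.val
  le_refl a := subset_rfl
  le_trans a b c h h' := Set.Subset.trans h h'
  le_antisymm a b h h' := Subtype.ext (subset_antisymm h h')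
  sup a b := ⟨a.val ∪ b.val, G.union_mem _ a.2 _ b.2⟩
  le_sup_left a b := Set.subset_union_left
  le_sup_right a b := Set.subset_union_right
  sup_le a b c h h' := Set.union_subset h h'
  inf a b := ⟨a.val ∩ b.val, G.inter_mem _ a.2 _ b.2⟩
  inf_le_left a b := Set.inter_subset_left
  inf_le_right a b := Set.inter_subset_right
  le_inf a b c h h' := Set.subset_inter h h'

instance GenFrame.instHeytingAUp (G : GenFrame) : HeytingAlgebra G.AUp :=
  { GenFrame.instLatticeAUp G with
    top := ⟨Set.univ, G.univ_mem⟩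
    le_top := fun a => Set.subset_univ _
    bot := ⟨∅, G.empty_mem⟩
    bot_le := fun a => Set.empty_subset _
    himp := fun a b => ⟨{x | ∀ y, G.le x y → y ∈ a.val → y ∈ b.val},
      G.himp_mem _ a.2 _ b.2⟩
    compl := fun a => ⟨{x | ∀ y, G.le x y → y ∈ a.val → y ∈ (∅ : Set G.X)},
      G.himp_mem _ a.2 _ G.empty_mem⟩
    le_himp_iff := by
      intro a b c
      show a.val ⊆ {x | ∀ y, G.le x y → y ∈ b.val → y ∈ c.val} ↔
        a.val ∩ b.val ⊆ c.val
      constructor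
      · rintro h x ⟨hxa, hxb⟩
        exact h hxa x (G.le_refl x) hxb
      · intro h x hxa y hle hyb
        exact h ⟨G.upA a.val a.2 hle hxa, hyb⟩
    himp_bot := fun a => rfl }

/-- The complex algebra `AUp(G)` of a general frame `G` is a conditional
Heyting algebra, with `a ⊳ b := {x | R_a[x] ⊆ b}`. -/
instance GenFrame.instCondHeytingAUp (G : GenFrame) : CondHeyting G.AUp where
  cond a b := ⟨{x | ∀ y, G.R a.val x y → y ∈ b.val}, G.cimp_mem _ a.2 _ b.2⟩
  cond_inf a b c := Subtype.ext (Set.ext fun x => by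
    show (∀ y, G.R a.val x y → y ∈ b.val ∩ c.val) ↔
      (∀ y, G.R a.val x y → y ∈ b.val) ∧ (∀ y, G.R a.val x y → y ∈ c.val)
    constructor
    · intro h
      exact ⟨fun y hy => (h y hy).1, fun y hy => (h y hy).2⟩
    · rintro ⟨h1, h2⟩ y hy
      exact ⟨h1 y hy, h2 y hy⟩)
  cond_top a := Subtype.ext (Set.ext fun x => by
    show (∀ y, G.R a.val x y → y ∈ (Set.univ : Set G.X)) ↔
      x ∈ (Set.univ : Set G.X)
    exact ⟨fun _ => trivial, fun _ y _ => trivial⟩)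

/-! ## Conditional Esakia spaces -/

/-- A conditional Esakia space: an Esakia space `(X, le, top)` together with a
family of relations `R a` indexed by the clopen upsets `a`, such that
`{x | R_a[x] ⊆ b}` is clopen for clopen upsets `a, b`, each `R_a[x]` is
closed, and `(≤ ∘ R_a ∘ ≤) = R_a`. -/
structure CondEsakia where
  X : Type
  ne : Nonempty X
  le : X → X → Prop
  le_refl : ∀ x, le x x
  le_trans : ∀ ⦃x y z⦄, le x y → le y z → le x z
  le_antisymm : ∀ ⦃x y⦄, le x y → le y x → x = y
  top : TopologicalSpace X
  compact : @CompactSpace X top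
  sep : ∀ x y : X, ¬ le x y →
    ∃ a : Set X, @IsClopen X top a ∧ IsUpset le a ∧ x ∈ a ∧ y ∉ a
  down_clopen : ∀ a : Set X, @IsClopen X top a →
    @IsClopen X top {x | ∃ y ∈ a, le x y}
  R : Set X → X → X → Prop
  box_clopen : ∀ a b : Set X, @IsClopen X top a → IsUpset le a →
    @IsClopen X top b → IsUpset le b →
    @IsClopen X top {x | ∀ y, R a x y → y ∈ b}
  coh : ∀ a : Set X, @IsClopen X top a → IsUpset le a →
    ∀ x z : X, (∃ x' y', le x x' ∧ R a x' y' ∧ le y' z) ↔ R a x z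
  im_closed : ∀ a : Set X, @IsClopen X top a → IsUpset le a →
    ∀ x : X, @IsClosed X top {y | R a x y}

/-- `a` is a clopen upset of the conditional Esakia space `S`. -/
def CondEsakia.ClopUp (S : CondEsakia) (a : Set S.X) : Prop :=
  @IsClopen S.X S.top a ∧ IsUpset S.le a

/-- Validity on a conditional Esakia space: truth at every world under every
valuation of the proposition letters by clopen upsets. -/
def CondEsakia.valid (S : CondEsakia) (φ : CForm) : Prop :=
  ∀ V : ℕ → Set S.X, (∀ p, S.ClopUp (V p)) → ∀ x, x ∈ csat S.le S.R V φ

/-- The family of relations of the empty fill-in `κ_∅(S)`: it agrees with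
`S.R` on clopen upsets and is empty on all other sets. -/
def CondEsakia.emptyFill (S : CondEsakia) : Set S.X → S.X → S.X → Prop :=
  fun a x y => S.ClopUp a ∧ S.R a x y

/-- Validity on the empty fill-in `κ_∅(S)`, a conditional Kripke frame:
truth at every world under every valuation by (arbitrary) upsets. -/
def CondEsakia.emptyFillValid (S : CondEsakia) (φ : CForm) : Prop :=
  ∀ V : ℕ → Set S.X, (∀ p, IsUpset S.le (V p)) →
    ∀ x, x ∈ csat S.le S.emptyFill V φ

/-! ## The modal language `L_□` -/

/-- Formulas of the modal language `L_□`. -/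
inductive MForm : Type where
  | var : ℕ → MForm
  | bot : MForm
  | and : MForm → MForm → MForm
  | or : MForm → MForm → MForm
  | imp : MForm → MForm → MForm
  | box : MForm → MForm

/-- The translation `(−)^p : L_□ → L_⊳`: it fixes proposition letters, `⊥`,
`∧`, `∨`, `→`, and sends `□ψ` to `p ⊳ ψ^p`. -/
def MForm.transl (p : ℕ) : MForm → CForm
  | MForm.var q => CForm.var q
  | MForm.bot => CForm.bot
  | MForm.and φ ψ => CForm.and (φ.transl p) (ψ.transl p)
  | MForm.or φ ψ => CForm.or (φ.transl p) (ψ.transl p)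
  | MForm.imp φ ψ => CForm.imp (φ.transl p) (ψ.transl p)
  | MForm.box φ => CForm.cond (CForm.var p) (φ.transl p)

/-- The proposition letter `p` occurs (as a subformula) in a modal formula. -/
def MForm.occurs (p : ℕ) : MForm → Prop
  | MForm.var q => p = q
  | MForm.bot => False
  | MForm.and φ ψ => φ.occurs p ∨ ψ.occurs p
  | MForm.or φ ψ => φ.occurs p ∨ ψ.occurs p
  | MForm.imp φ ψ => φ.occurs p ∨ ψ.occurs p
  | MForm.box φ => φ.occurs p

/-- Truth sets of `L_□`-formulas in a modal model, by intuitionistic Kripke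
semantics with `x ⊨ □φ` iff every `y` with `x R y` satisfies `φ`. -/
def msat {X : Type} (le : X → X → Prop) (R : X → X → Prop)
    (V : ℕ → Set X) : MForm → Set X
  | MForm.var p => V p
  | MForm.bot => ∅
  | MForm.and φ ψ => msat le R V φ ∩ msat le R V ψ
  | MForm.or φ ψ => msat le R V φ ∪ msat le R V ψ
  | MForm.imp φ ψ => {x | ∀ y, le x y → y ∈ msat le R V φ → y ∈ msat le R V ψ}
  | MForm.box φ => {x | ∀ y, R x y → y ∈ msat le R V φ}

/-- A modal Esakia space: an Esakia space with a relation `R` such that each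
`R[x]` is closed and `R = (≤ ∘ R ∘ ≤)`. -/
structure ModalEsakia where
  X : Type
  ne : Nonempty X
  le : X → X → Prop
  le_refl : ∀ x, le x x
  le_trans : ∀ ⦃x y z⦄, le x y → le y z → le x z
  le_antisymm : ∀ ⦃x y⦄, le x y → le y x → x = y
  top : TopologicalSpace X
  compact : @CompactSpace X top
  sep : ∀ x y : X, ¬ le x y →
    ∃ a : Set X, @IsClopen X top a ∧ IsUpset le a ∧ x ∈ a ∧ y ∉ a
  down_clopen : ∀ a : Set X, @IsClopen X top a →
    @IsClopen X top {x | ∃ y ∈ a, le x y}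
  R : X → X → Prop
  im_closed : ∀ x : X, @IsClosed X top {y | R x y}
  coh : ∀ x z : X, (∃ x' y', le x x' ∧ R x' y' ∧ le y' z) ↔ R x z

/-- Validity on a modal Esakia space: truth everywhere under every valuation
by clopen upsets. -/
def ModalEsakia.valid (M : ModalEsakia) (φ : MForm) : Prop :=
  ∀ V : ℕ → Set M.X, (∀ p, @IsClopen M.X M.top (V p) ∧ IsUpset M.le (V p)) →
    ∀ x, x ∈ msat M.le M.R V φ

/-- Validity on the underlying modal frame `κ(M)` of a modal Esakia space:
truth everywhere under every valuation by arbitrary upsets. -/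
def ModalEsakia.frameValid (M : ModalEsakia) (φ : MForm) : Prop :=
  ∀ V : ℕ → Set M.X, (∀ p, IsUpset M.le (V p)) → ∀ x, x ∈ msat M.le M.R V φ

/-- An `L_□`-formula is d-persistent if its validity on a modal Esakia space
implies its validity on the underlying modal frame. -/
def DPersistent (φ : MForm) : Prop :=
  ∀ M : ModalEsakia, M.valid φ → M.frameValid φ

/-- The axiom `(mp)  (p ∧ (p ⊳ q)) → q`. -/
def axMp : CForm :=
  CForm.imp (CForm.and (CForm.var 0) (CForm.cond (CForm.var 0) (CForm.var 1)))
    (CForm.var 1)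

/-- The transitivity axiom `(tr)  ((p ⊳ q) ∧ (q ⊳ r)) → (p ⊳ r)`. -/
def axTr : CForm :=
  CForm.imp (CForm.and (CForm.cond (CForm.var 0) (CForm.var 1))
      (CForm.cond (CForm.var 1) (CForm.var 2)))
    (CForm.cond (CForm.var 0) (CForm.var 2))

/-! ## Soundness -/

theorem csat_upset (F : CondFrame) (V : ℕ → Set F.X) (hV : ∀ p, IsUpset F.le (V p)) :
    ∀ φ, IsUpset F.le (csat F.le F.R V φ) := by
  intro φ
  induction φ with
  | var p => exact hV p
  | bot => intro x y _ h; exact h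
  | and φ ψ h1 h2 => intro x y h hx; exact ⟨h1 h hx.1, h2 h hx.2⟩
  | or φ ψ h1 h2 =>
    intro x y h hx
    rcases hx with hx | hx
    · exact Or.inl (h1 h hx)
    · exact Or.inr (h2 h hx)
  | imp φ ψ h1 h2 => intro x y h hx z hz; exact hx z (F.le_trans h hz)
  | cond φ ψ h1 h2 =>
    intro x y h hx z hz
    obtain ⟨w, hw, hwz⟩ := F.coh _ h1 h hz
    exact h2 hwz (hx w hw)

theorem csat_psubst (F : CondFrame) (V : ℕ → Set F.X) (σ : ℕ → CForm) :
    ∀ φ, csat F.le F.R V (psubst σ φ) =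
      csat F.le F.R (fun n => csat F.le F.R V (σ n)) φ := by
  intro φ
  induction φ with
  | var p => rfl
  | bot => rfl
  | and φ ψ h1 h2 => simp only [psubst, csat, h1, h2]
  | or φ ψ h1 h2 => simp only [psubst, csat, h1, h2]
  | imp φ ψ h1 h2 => simp only [psubst, csat, h1, h2]
  | cond φ ψ h1 h2 => simp only [psubst, csat, h1, h2]

theorem valid_iff_eq (F : CondFrame) (V : ℕ → Set F.X) (φ ψ : CForm)
    (h : ∀ x, x ∈ csat F.le F.R V (cIff φ ψ)) :
    csat F.le F.R V φ = csat F.le F.R V ψ := by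
  ext x
  exact ⟨(h x).1 x (F.le_refl x), (h x).2 x (F.le_refl x)⟩

theorem ikri_sound (F : CondFrame)
    (hF : ∀ (x : F.X) (a b : Set F.X), IsUpset F.le a → IsUpset F.le b →
          ((x ∈ a → x ∈ upCl F.le {y | F.R a x y}) ∧
            ({y | F.R a x y} ⊆ b →
              {y | F.R a x y} ⊆ upCl F.le {y | F.R b x y})))
    {φ : CForm} (h : ICK {axMp, axTr} φ) : F.valid φ := by
  induction h with
  | prem h =>
    intro V hV x
    rcases h with rfl | h
    · rintro y - ⟨h0, h1⟩
      obtain ⟨z, hz, hzy⟩ := (hF y (V 0) (V 0) (hV 0) (hV 0)).1 h0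
      exact hV 1 hzy (h1 z hz)
    · rw [Set.mem_singleton_iff] at h
      subst h
      rintro y - ⟨h0, h1⟩ z hz
      obtain ⟨w, hw, hwz⟩ := (hF y (V 0) (V 1) (hV 0) (hV 1)).2 h0 hz
      exact hV 2 hwz (h1 w hw)
  | a1 => rintro V hV x y - h; exact h.1
  | a2 => rintro V hV x y - h; exact h.2
  | a3 =>
    rintro V hV x y - h z hz h' w hw h0
    exact ⟨h w (F.le_trans hz hw) h0, h' w hw h0⟩
  | a4 => rintro V hV x y - h; exact Or.inl h
  | a5 => rintro V hV x y - h; exact Or.inr h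
  | a6 =>
    rintro V hV x y - h z hz h' w hw h0
    rcases h0 with h0 | h0
    · exact h w (F.le_trans hz hw) h0
    · exact h' w hw h0
  | a7 => rintro V hV x y - h; exact h.elim
  | a8 => rintro V hV x y - h z hz _; exact hV 0 hz h
  | a9 =>
    rintro V hV x y - h z hz h' w hw h0
    exact h w (F.le_trans hz hw) h0 w (F.le_refl w) (h' w hw h0)
  | kc =>
    intro V hV x
    refine ⟨fun y _ h => ⟨fun z hz => (h z hz).1, fun z hz => (h z hz).2⟩,
      fun y _ h z hz => ⟨h.1 z hz, h.2 z hz⟩⟩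
  | nc =>
    intro V hV x
    exact ⟨fun y _ _ z _ h => h, fun y _ _ z _ w _ h => h⟩
  | subst σ _ ih =>
    intro V hV x
    rw [csat_psubst]
    exact ih _ (fun p => csat_upset F V hV (σ p)) x
  | mp _ _ ih1 ih2 =>
    intro V hV x
    exact ih1 V hV x x (F.le_refl x) (ih2 V hV x)
  | congL _ ih =>
    intro V hV x
    have e := valid_iff_eq F V _ _ (ih V hV)
    refine ⟨fun y _ h => ?_, fun y _ h => ?_⟩
    · simp only [csat] at h ⊢; rwa [← e]
    · simp only [csat] at h ⊢; rwa [e]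
  | congR _ ih =>
    intro V hV x
    have e := valid_iff_eq F V _ _ (ih V hV)
    refine ⟨fun y _ h => ?_, fun y _ h => ?_⟩
    · simp only [csat] at h ⊢; rwa [← e]
    · simp only [csat] at h ⊢; rwa [e]

/-! ## Theories -/

/-- The logic under consideration. -/
abbrev Lg : CForm → Prop := ICK {axMp, axTr}

/-- A theory contains all theorems and is closed under modus ponens. -/
structure IsTh (T : Set CForm) : Prop where
  thm : ∀ φ, Lg φ → φ ∈ T
  mp : ∀ {φ ψ}, CForm.imp φ ψ ∈ T → φ ∈ T → ψ ∈ T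

/-- Substitution for the first three letters. -/
def s3 (a b c : CForm) : ℕ → CForm
  | 0 => a
  | 1 => b
  | _ => c

theorem isTh_Lg : IsTh {φ | Lg φ} := ⟨fun _ h => h, fun h h' => ICK.mp h h'⟩

namespace IsTh

theorem k {T : Set CForm} (hT : IsTh T) {a : CForm} (b : CForm) (h : a ∈ T) : CForm.imp b a ∈ T :=
  hT.mp (hT.thm _ (ICK.subst (s3 a b b) ICK.a8)) h

theorem s {T : Set CForm} (hT : IsTh T) {a b c : CForm} (h : CForm.imp a (CForm.imp b c) ∈ T) (h' : CForm.imp a b ∈ T) :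
    CForm.imp a c ∈ T :=
  hT.mp (hT.mp (hT.thm _ (ICK.subst (s3 a b c) ICK.a9)) h) h'

theorem id {T : Set CForm} (hT : IsTh T) (a : CForm) : CForm.imp a a ∈ T :=
  hT.s (b := CForm.imp a a) (hT.thm _ (ICK.subst (s3 a (CForm.imp a a) a) ICK.a8))
    (hT.thm _ (ICK.subst (s3 a a a) ICK.a8))

/-- The theory obtained by adding a formula. -/
theorem add {T : Set CForm} (hT : IsTh T) (a : CForm) : IsTh {d | CForm.imp a d ∈ T} :=
  ⟨fun _ h => hT.k a (hT.thm _ h), fun h h' => hT.s h h'⟩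

theorem and_left {T : Set CForm} (hT : IsTh T) {a b : CForm} (h : CForm.and a b ∈ T) : a ∈ T :=
  hT.mp (hT.thm _ (ICK.subst (s3 a b b) ICK.a1)) h

theorem and_right {T : Set CForm} (hT : IsTh T) {a b : CForm} (h : CForm.and a b ∈ T) : b ∈ T :=
  hT.mp (hT.thm _ (ICK.subst (s3 a b b) ICK.a2)) h

theorem and_intro {T : Set CForm} (hT : IsTh T) {a b : CForm} (h : a ∈ T) (h' : b ∈ T) : CForm.and a b ∈ T :=
  hT.mp (hT.mp (hT.mp (hT.thm _ (ICK.subst (s3 a a b) ICK.a3)) (hT.id a)) (hT.k a h')) h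

theorem or_left {T : Set CForm} (hT : IsTh T) {a : CForm} (b : CForm) (h : a ∈ T) : CForm.or a b ∈ T :=
  hT.mp (hT.thm _ (ICK.subst (s3 a b b) ICK.a4)) h

theorem or_right {T : Set CForm} (hT : IsTh T) (a : CForm) {b : CForm} (h : b ∈ T) : CForm.or a b ∈ T :=
  hT.mp (hT.thm _ (ICK.subst (s3 a b b) ICK.a5)) h

theorem or_elim {T : Set CForm} (hT : IsTh T) {a b c : CForm} (h : CForm.imp a c ∈ T) (h' : CForm.imp b c ∈ T)
    (h'' : CForm.or a b ∈ T) : c ∈ T :=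
  hT.mp (hT.mp (hT.mp (hT.thm _ (ICK.subst (s3 a b c) ICK.a6)) h) h') h''

theorem exfalso {T : Set CForm} (hT : IsTh T) (c : CForm) (h : CForm.bot ∈ T) : c ∈ T :=
  hT.mp (hT.thm _ (ICK.subst (s3 c c c) ICK.a7)) h

theorem cond_and {T : Set CForm} (hT : IsTh T) (a : CForm) {b c : CForm} (h : CForm.cond a b ∈ T) (h' : CForm.cond a c ∈ T) :
    CForm.cond a (CForm.and b c) ∈ T :=
  hT.mp (hT.and_right (hT.thm _ (ICK.subst (s3 a b c) ICK.kc))) (hT.and_intro h h')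

theorem cond_and_right {T : Set CForm} (hT : IsTh T) (a : CForm) {b c : CForm} (h : CForm.cond a (CForm.and b c) ∈ T) :
    CForm.cond a c ∈ T :=
  hT.and_right (hT.mp (hT.and_left (hT.thm _ (ICK.subst (s3 a b c) ICK.kc))) h)

theorem cond_thm {T : Set CForm} (hT : IsTh T) (a : CForm) {b : CForm} (h : Lg b) : CForm.cond a b ∈ T := by
  have h1 : CForm.cond a cTop ∈ T :=
    hT.mp (hT.and_right (hT.thm _ (ICK.subst (s3 a a a) ICK.nc))) (hT.id CForm.bot)
  have h2 : Lg (cIff cTop b) :=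
    isTh_Lg.and_intro (isTh_Lg.k cTop h) (isTh_Lg.k b (isTh_Lg.id CForm.bot))
  exact hT.mp (hT.and_left (hT.thm _ (ICK.congR (χ := a) h2))) h1

theorem cond_mono {T : Set CForm} (hT : IsTh T) (a : CForm) {b c : CForm} (hbc : Lg (CForm.imp b c))
    (h : CForm.cond a b ∈ T) : CForm.cond a c ∈ T := by
  have h1 : Lg (CForm.imp b (CForm.and b c)) :=
    (isTh_Lg.add b).and_intro (isTh_Lg.id b) hbc
  have h3 : Lg (CForm.imp (CForm.and b c) b) := ICK.subst (s3 b c c) ICK.a1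
  have h2 : Lg (cIff b (CForm.and b c)) := isTh_Lg.and_intro h1 h3
  exact hT.cond_and_right a (hT.mp (hT.and_left (hT.thm _ (ICK.congR (χ := a) h2))) h)

/-- The theory of consequents of `a`. -/
theorem box {T : Set CForm} (hT : IsTh T) (a : CForm) : IsTh {d | CForm.cond a d ∈ T} := by
  refine ⟨fun _ h => hT.cond_thm a h, fun {b c} h h' => ?_⟩
  refine hT.cond_mono a ?_ (hT.cond_and a h h')
  have hA := isTh_Lg.add (CForm.and (CForm.imp b c) b)
  have hi := isTh_Lg.id (CForm.and (CForm.imp b c) b)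
  exact hA.mp (hA.and_left hi) (hA.and_right hi)

theorem cond_congr {T : Set CForm} (hT : IsTh T) {a b : CForm} (c : CForm) (hab : Lg (CForm.imp a b)) (hba : Lg (CForm.imp b a))
    (h : CForm.cond a c ∈ T) : CForm.cond b c ∈ T :=
  hT.mp (hT.and_left (hT.thm _ (ICK.congL (χ := c) (isTh_Lg.and_intro hab hba)))) h

theorem cond_mp {T : Set CForm} (hT : IsTh T) {a b : CForm} (h : a ∈ T) (h' : CForm.cond a b ∈ T) : b ∈ T :=
  hT.mp (hT.thm _ (ICK.subst (s3 a b b) (ICK.prem (φ := axMp) (Or.inl rfl))))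
    (hT.and_intro h h')

theorem cond_tr {T : Set CForm} (hT : IsTh T) {a b c : CForm} (h : CForm.cond a b ∈ T) (h' : CForm.cond b c ∈ T) :
    CForm.cond a c ∈ T :=
  hT.mp (hT.thm _ (ICK.subst (s3 a b c) (ICK.prem (φ := axTr) (Or.inr rfl))))
    (hT.and_intro h h')

end IsTh

/-- Prime theories. -/
structure IsPrTh (T : Set CForm) : Prop extends IsTh T where
  bot : CForm.bot ∉ T
  or : ∀ {a b}, CForm.or a b ∈ T → a ∈ T ∨ b ∈ T

theorem exists_prime {T : Set CForm} (hT : IsTh T) {c : CForm} (hc : c ∉ T) :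
    ∃ M, IsPrTh M ∧ T ⊆ M ∧ c ∉ M := by
  obtain ⟨M, hTM, hM⟩ := zorn_subset_nonempty {U : Set CForm | IsTh U ∧ c ∉ U} (by
    intro C hC hch hne
    obtain ⟨U0, hU0⟩ := hne
    refine ⟨⋃₀ C, ⟨⟨?_, ?_⟩, ?_⟩, fun s hs => Set.subset_sUnion_of_mem hs⟩
    · intro φ h
      exact ⟨U0, hU0, (hC hU0).1.thm _ h⟩
    · rintro a b ⟨U, hU, h⟩ ⟨W, hW, h'⟩
      rcases hch.total hU hW with hle | hle
      · exact ⟨W, hW, (hC hW).1.mp (hle h) h'⟩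
      · exact ⟨U, hU, (hC hU).1.mp h (hle h')⟩
    · rintro ⟨U, hU, h⟩
      exact (hC hU).2 h) T ⟨hT, hc⟩
  have hMT : IsTh M := hM.prop.1
  have key : ∀ a, a ∉ M → CForm.imp a c ∈ M := by
    intro a ha
    by_contra hac
    have := hM.le_of_ge (y := {d | CForm.imp a d ∈ M}) ⟨hMT.add a, hac⟩
      (fun d hd => hMT.k a hd)
    exact ha (this (hMT.id a))
  refine ⟨M, ⟨hMT, fun h => hM.prop.2 (hMT.exfalso c h), ?_⟩, hTM, hM.prop.2⟩
  intro a b hab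
  by_contra hcon
  rw [not_or] at hcon
  exact hM.prop.2 (hMT.or_elim (key a hcon.1) (key b hcon.2) hab)

/-! ## The canonical frame -/

/-- Worlds of the canonical frame. -/
abbrev CW : Type := {T : Set CForm // IsPrTh T}

/-- Canonical truth set. -/
def tset (φ : CForm) : Set CW := {x | φ ∈ x.1}

/-- Canonical relation indexed by a formula. -/
def cR (φ : CForm) (x y : CW) : Prop := ∀ ψ, CForm.cond φ ψ ∈ x.1 → ψ ∈ y.1

theorem imp_mem (x : CW) (φ ψ : CForm) :
    CForm.imp φ ψ ∈ x.1 ↔ ∀ y : CW, x.1 ⊆ y.1 → φ ∈ y.1 → ψ ∈ y.1 := by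
  constructor
  · intro h y hxy hφ
    exact y.2.mp (hxy h) hφ
  · intro h
    by_contra hc
    obtain ⟨M, hM, hsub, hn⟩ := exists_prime (x.2.toIsTh.add φ) hc
    exact hn (h ⟨M, hM⟩ (fun d hd => hsub (x.2.toIsTh.k φ hd)) (hsub (x.2.toIsTh.id φ)))

theorem cond_mem (x : CW) (φ ψ : CForm) :
    CForm.cond φ ψ ∈ x.1 ↔ ∀ y : CW, cR φ x y → ψ ∈ y.1 := by
  constructor
  · intro h y hxy
    exact hxy ψ h
  · intro h
    by_contra hc
    obtain ⟨M, hM, hsub, hn⟩ := exists_prime (x.2.toIsTh.box φ) hc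
    exact hn (h ⟨M, hM⟩ (fun d hd => hsub hd))

theorem tset_imp {φ ψ : CForm} (h : tset φ ⊆ tset ψ) : Lg (CForm.imp φ ψ) := by
  by_contra hc
  obtain ⟨M, hM, hsub, hn⟩ := exists_prime isTh_Lg (c := CForm.imp φ ψ) hc
  exact hn ((imp_mem ⟨M, hM⟩ φ ψ).2 fun y _ hy => h hy)

/-- The filled-in canonical relation for arbitrary sets. -/
def fR (b : Set CW) (x z : CW) : Prop :=
  (∃ y : CW, x.1 ⊆ y.1 ∧ ∃ φ, cR φ y z ∧ ({w | cR φ y w} ⊆ b ∨ b = tset φ)) ∨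
    (x.1 ⊆ z.1 ∧ z ∈ b)

theorem fR_tset (ψ : CForm) (x z : CW) : fR (tset ψ) x z ↔ cR ψ x z := by
  constructor
  · rintro (⟨y, hxy, φ, hyz, hs | he⟩ | ⟨hxz, hz⟩) χ hχ
    · exact hyz _ (y.2.toIsTh.cond_tr ((cond_mem y φ ψ).2 fun w hw => hs hw) (hxy hχ))
    · exact hyz _ (y.2.toIsTh.cond_congr χ (tset_imp he.subset) (tset_imp he.symm.subset)
        (hxy hχ))
    · exact z.2.toIsTh.cond_mp hz (hxz hχ)
  · intro h
    exact Or.inl ⟨x, subset_rfl, ψ, h, Or.inr rfl⟩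

/-- The canonical frame (given a world). -/
def canF (x0 : CW) : CondFrame where
  X := CW
  ne := ⟨x0⟩
  le x y := x.1 ⊆ y.1
  le_refl x := subset_rfl
  le_trans _ _ _ h h' := Set.Subset.trans h h'
  R := fR
  coh := by
    rintro a - x y z hxy (⟨w, hyw, φ, h⟩ | ⟨hyz, hz⟩)
    · exact ⟨z, Or.inl ⟨w, hxy.trans hyw, φ, h⟩, subset_rfl⟩
    · exact ⟨z, Or.inr ⟨hxy.trans hyz, hz⟩, subset_rfl⟩

theorem truth (x0 : CW) : ∀ φ, csat (canF x0).le (canF x0).R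
    (fun p => tset (CForm.var p)) φ = tset φ := by
  intro φ
  induction φ with
  | var p => rfl
  | bot =>
    ext x
    exact ⟨fun h => h.elim, fun h => x.2.bot h⟩
  | and φ ψ h1 h2 =>
    simp only [csat, h1, h2]
    ext x
    exact ⟨fun h => x.2.toIsTh.and_intro h.1 h.2,
      fun h => ⟨x.2.toIsTh.and_left h, x.2.toIsTh.and_right h⟩⟩
  | or φ ψ h1 h2 =>
    simp only [csat, h1, h2]
    ext x
    refine ⟨fun h => ?_, fun h => x.2.or h⟩
    rcases h with h | h
    · exact x.2.toIsTh.or_left _ h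
    · exact x.2.toIsTh.or_right _ h
  | imp φ ψ h1 h2 =>
    simp only [csat, h1, h2]
    ext x
    exact (imp_mem x φ ψ).symm
  | cond φ ψ h1 h2 =>
    simp only [csat, h1, h2]
    ext x
    refine Iff.trans ?_ (cond_mem x φ ψ).symm
    exact forall_congr' fun y => imp_congr (fR_tset φ x y) Iff.rfl

/-- `ICK ⊕ (mp) ⊕ (tr)` is sound and complete with respect
to conditional Kripke frames satisfying, for all worlds `x` and upsets `a, b`:
`x ∈ a` implies `x ∈ ↑(R_a[x])`, and `R_a[x] ⊆ b` implies
`R_a[x] ⊆ ↑(R_b[x])`. -/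
theorem ikri_completeness (φ : CForm) :
    ICK {axMp, axTr} φ ↔
      ∀ F : CondFrame,
        (∀ (x : F.X) (a b : Set F.X), IsUpset F.le a → IsUpset F.le b →
          ((x ∈ a → x ∈ upCl F.le {y | F.R a x y}) ∧
            ({y | F.R a x y} ⊆ b →
              {y | F.R a x y} ⊆ upCl F.le {y | F.R b x y}))) →
        F.valid φ := by
  constructor
  · intro h F hF
    exact ikri_sound F hF h
  · intro h
    by_contra hc
    obtain ⟨M, hM, -, hn⟩ := exists_prime isTh_Lg (c := φ) hc
    have hv := h (canF ⟨M, hM⟩) (by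
      intro x a b _ _
      refine ⟨fun hx => ⟨x, Or.inr ⟨subset_rfl, hx⟩, subset_rfl⟩, fun hab z hz => ?_⟩
      refine ⟨z, ?_, subset_rfl⟩
      rcases hz with ⟨y, hxy, χ, hyz, hs⟩ | ⟨hxz, hza⟩
      · exact Or.inl ⟨y, hxy, χ, hyz, Or.inl fun w hw =>
          hab (Or.inl ⟨y, hxy, χ, hw, hs⟩)⟩
      · exact Or.inr ⟨hxz, hab (Or.inr ⟨hxz, hza⟩)⟩)
      (fun p => tset (CForm.var p)) (fun p x y hxy hx => hxy hx) ⟨M, hM⟩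
    rw [truth] at hv
    exact hn hv
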